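/- Let b = e0 − 2iβ²·C·e1 ∈ Q, where C = F·E − (i/4)(K − K^{-1}) is the Casimir element. Then b is central and invertible, and with evaluation element α = 1 and coevaluation element b, the quasi-Hopf antipode axioms hold: (i) for all a ∈ Q, writing Δ(a) = Σ a'⊗a'', one has Σ S(a')·a'' = ε(a)·1 and Σ a'·b·S(a'') = ε(a)·b; (ii) writing Φ = Σ Φ'⊗Φ''⊗Φ''' and Φ^{-1} = Σ \barΦ'⊗\barΦ''⊗\barΦ''', one has Σ S(Φ')·Φ''·b·S(Φ''') = 1 and Σ \barΦ'·b·S(\barΦ'')·\barΦ''' = 1. Hence (Q, Φ, S, α = 1, b) is a quasi-Hopf algebra. -/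

import Mathlib

open TensorProduct

set_option maxHeartbeats 1000000
set_option synthInstance.maxHeartbeats 400000

noncomputable section

/-- Generators of the restricted quantum group `Q = \bar U_i sl(2)`. -/
inductive QGen : Type
  | E | F | K | Kinv
deriving DecidableEq

/-- The free algebra on the generators. -/
abbrev FA : Type := FreeAlgebra ℂ QGen

def ιE : FA := FreeAlgebra.ι ℂ QGen.E
def ιF : FA := FreeAlgebra.ι ℂ QGen.F
def ιK : FA := FreeAlgebra.ι ℂ QGen.K
def ιKi : FA := FreeAlgebra.ι ℂ QGen.Kinv

/-- Defining relations of `\bar U_i sl(2)` (at `q = i`, i.e. `p = 2`). -/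
inductive QRel : FA → FA → Prop
  | KKi : QRel (ιK * ιKi) 1
  | KiK : QRel (ιKi * ιK) 1
  | KEKi : QRel (ιK * ιE * ιKi) (-ιE)
  | KFKi : QRel (ιK * ιF * ιKi) (-ιF)
  | EF : QRel (ιE * ιF - ιF * ιE) ((2 * Complex.I)⁻¹ • (ιK - ιKi))
  | Esq : QRel (ιE ^ 2) 0
  | Fsq : QRel (ιF ^ 2) 0
  | K4 : QRel (ιK ^ 4) 1

/-- The restricted quantum group `\bar U_i sl(2)`: the quotient of the free algebra
by the two-sided ideal generated by the defining relations. -/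
abbrev Q : Type := RingQuot QRel

def gE : Q := RingQuot.mkAlgHom ℂ QRel ιE
def gF : Q := RingQuot.mkAlgHom ℂ QRel ιF
def gK : Q := RingQuot.mkAlgHom ℂ QRel ιK
def gKi : Q := RingQuot.mkAlgHom ℂ QRel ιKi

section Gadgets

variable (k : Type) [Field k] (A : Type) [Ring A] [Algebra k A]

abbrev TP2 : Type := A ⊗[k] A
abbrev TP3 : Type := A ⊗[k] (A ⊗[k] A)
abbrev TP4 : Type := A ⊗[k] (A ⊗[k] (A ⊗[k] A))

/-- Multiplication `a ⊗ b ↦ a * b`. -/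
def mulA : TP2 k A →ₗ[k] A := LinearMap.mul' k A

/-- Tensor flip `a ⊗ b ↦ b ⊗ a`. -/
def flipA : TP2 k A →ₗ[k] TP2 k A := (TensorProduct.comm k A A).toLinearMap

/-- `a ↦ a ⊗ 1`. -/
def lTen : A →ₗ[k] TP2 k A := (TensorProduct.mk k A A).flip 1

/-- `a ↦ 1 ⊗ a`. -/
def rTen : A →ₗ[k] TP2 k A := TensorProduct.mk k A A 1

/-- `a ⊗ b ↦ a ⊗ b ⊗ 1`. -/
def emb12 : TP2 k A →ₗ[k] TP3 k A := TensorProduct.map LinearMap.id (lTen k A)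

/-- `a ⊗ b ↦ a ⊗ 1 ⊗ b`. -/
def emb13 : TP2 k A →ₗ[k] TP3 k A := TensorProduct.map LinearMap.id (rTen k A)

/-- `a ⊗ b ↦ 1 ⊗ a ⊗ b`. -/
def emb23 : TP2 k A →ₗ[k] TP3 k A := TensorProduct.mk k A (TP2 k A) 1

/-- `a ⊗ b ⊗ c ↦ a ⊗ c ⊗ b`. -/
def perm132 : TP3 k A →ₗ[k] TP3 k A := TensorProduct.map LinearMap.id (flipA k A)

/-- `a ⊗ b ⊗ c ↦ b ⊗ c ⊗ a`. -/
def perm231 : TP3 k A →ₗ[k] TP3 k A :=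
  (TensorProduct.assoc k A A A).toLinearMap ∘ₗ (TensorProduct.comm k A (TP2 k A)).toLinearMap

/-- `a ⊗ b ⊗ c ↦ c ⊗ a ⊗ b`. -/
def perm312 : TP3 k A →ₗ[k] TP3 k A :=
  (TensorProduct.comm k (TP2 k A) A).toLinearMap ∘ₗ (TensorProduct.assoc k A A A).symm.toLinearMap

/-- `a ⊗ b ⊗ c ↦ b ⊗ a ⊗ c`. -/
def perm213 : TP3 k A →ₗ[k] TP3 k A :=
  (TensorProduct.assoc k A A A).toLinearMap ∘ₗ
    (TensorProduct.map (flipA k A) LinearMap.id) ∘ₗ (TensorProduct.assoc k A A A).symm.toLinearMap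

variable {k A}

/-- `(Δ ⊗ id)` on two tensor factors, landing in the triple tensor product. -/
def copL (D : A →ₐ[k] TP2 k A) : TP2 k A →ₗ[k] TP3 k A :=
  (TensorProduct.assoc k A A A).toLinearMap ∘ₗ TensorProduct.map D.toLinearMap LinearMap.id

/-- `(id ⊗ Δ)` on two tensor factors. -/
def copR (D : A →ₐ[k] TP2 k A) : TP2 k A →ₗ[k] TP3 k A :=
  TensorProduct.map LinearMap.id D.toLinearMap

/-- `(ε ⊗ id) : A ⊗ A → A`. -/
def cuL (ce : A →ₐ[k] k) : TP2 k A →ₗ[k] A :=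
  (TensorProduct.lid k A).toLinearMap ∘ₗ TensorProduct.map ce.toLinearMap LinearMap.id

/-- `(id ⊗ ε) : A ⊗ A → A`. -/
def cuR (ce : A →ₐ[k] k) : TP2 k A →ₗ[k] A :=
  (TensorProduct.rid k A).toLinearMap ∘ₗ TensorProduct.map LinearMap.id ce.toLinearMap

/-- `(id ⊗ ε ⊗ id) : A ⊗ A ⊗ A → A ⊗ A`. -/
def cuMid (ce : A →ₐ[k] k) : TP3 k A →ₗ[k] TP2 k A :=
  TensorProduct.map LinearMap.id (cuL ce)

/-- `(Δ ⊗ id ⊗ id)`. -/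
def cop4_1 (D : A →ₐ[k] TP2 k A) : TP3 k A →ₗ[k] TP4 k A :=
  (TensorProduct.assoc k A A (TP2 k A)).toLinearMap ∘ₗ TensorProduct.map D.toLinearMap LinearMap.id

/-- `(id ⊗ Δ ⊗ id)`. -/
def cop4_2 (D : A →ₐ[k] TP2 k A) : TP3 k A →ₗ[k] TP4 k A :=
  TensorProduct.map LinearMap.id (copL D)

/-- `(id ⊗ id ⊗ Δ)`. -/
def cop4_3 (D : A →ₐ[k] TP2 k A) : TP3 k A →ₗ[k] TP4 k A :=
  TensorProduct.map LinearMap.id (copR D)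

/-- `a ⊗ b ⊗ c ↦ a ⊗ b ⊗ c ⊗ 1`, i.e. `Φ ↦ Φ ⊗ 1`. -/
def pad4 : TP3 k A →ₗ[k] TP4 k A :=
  TensorProduct.map LinearMap.id (TensorProduct.map LinearMap.id (lTen k A))

/-- `a ⊗ b ⊗ c ↦ f(a) * g(b) * h(c)`. -/
def tmap3 (f g h : A →ₗ[k] A) : TP3 k A →ₗ[k] A :=
  mulA k A ∘ₗ TensorProduct.map f (mulA k A ∘ₗ TensorProduct.map g h)

/-- `a ⊗ b ↦ S(a) * b`, used in the antipode axiom `m ∘ (S ⊗ id) ∘ Δ = 1·ε`. -/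
def antipL (s : A →ₗ[k] A) : TP2 k A →ₗ[k] A := mulA k A ∘ₗ TensorProduct.map s LinearMap.id

/-- `a ⊗ b ↦ a * S(b)`. -/
def antipR (s : A →ₗ[k] A) : TP2 k A →ₗ[k] A := mulA k A ∘ₗ TensorProduct.map LinearMap.id s

end Gadgets

/-- Central idempotent `e₀ = (1 + K²)/2`. -/
def e0 : Q := (2:ℂ)⁻¹ • (1 + gK ^ 2)

/-- Central idempotent `e₁ = (1 − K²)/2`. -/
def e1 : Q := (2:ℂ)⁻¹ • (1 - gK ^ 2)

/-- `f⁺ = −i F`. -/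
def fp : Q := (-Complex.I) • gF

/-- `f⁻ = E K⁻¹`. -/
def fm : Q := gE * gKi

/-- The Casimir element `C = FE − (i/4)(K − K⁻¹)`. -/
def Cas : Q := gF * gE - (Complex.I / 4) • (gK - gKi)

def t2 (a b : Q) : TP2 ℂ Q := a ⊗ₜ[ℂ] b

def t3 (a b c : Q) : TP3 ℂ Q := a ⊗ₜ[ℂ] (b ⊗ₜ[ℂ] c)

def eEF : Q := gE * gF
def eEK : Q := gE * gK
def eFK : Q := gF * gK
def eEFK : Q := gE * gF * gK

/-- `Φ^{010}` component of the coassociator. -/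
def Phi010 : TP3 ℂ Q :=
  t3 1 1 1 - (1 + Complex.I) • t3 gE gK gF + (1 - Complex.I) • t3 eFK gK eEK
    + (2:ℂ) • t3 eEFK 1 eEFK

/-- `Φ^{101}` component of the coassociator. -/
def Phi101 : TP3 ℂ Q :=
  (Complex.I - 1) • t3 1 gF eEK + t3 1 gK 1 + (2:ℂ) • t3 1 eEF eEFK
    - (1 + Complex.I) • t3 1 eEK gF - (1 + Complex.I) • t3 gE eFK 1
    + (2 * Complex.I) • t3 gE eEFK gF + (1 - Complex.I) • t3 eFK gE 1
    - (2 * Complex.I) • t3 eFK eEFK eEK - (2:ℂ) • t3 eEFK eEF 1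

/-- `Φ^{111}` component of the coassociator. -/
def Phi111 (β : ℂ) : TP3 ℂ Q :=
  (Complex.I * β ^ 2) • (
    (1 + Complex.I) • t3 1 gF eEK - t3 1 gK 1 - (2:ℂ) • t3 1 eEF 1
      - (2 * Complex.I) • t3 1 eEF eEFK + (1 + Complex.I) • t3 1 eEK gF
      - (1 + Complex.I) • t3 gE 1 gF + (1 + Complex.I) • t3 gE eFK 1
      + (2 * Complex.I) • t3 gE eFK eEFK + (2:ℂ) • t3 gE eEFK gF
      - (1 + Complex.I) • t3 eFK 1 eEK + (1 + Complex.I) • t3 eFK gE 1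
      + (2 * Complex.I) • t3 eFK gE eEFK + (2:ℂ) • t3 eFK eEFK eEK
      + (2 * Complex.I) • t3 eEFK gF eEK + (2 * Complex.I) • t3 eEFK gK eEFK
      - (2 * Complex.I) • t3 eEFK eEF 1 + (2 * Complex.I) • t3 eEFK eEK gF
      + (4:ℂ) • t3 eEFK eEF eEFK)

/-- The coassociator `Φ` of the quasi-Hopf algebra structure on `Q`. -/
def Phi (β : ℂ) : TP3 ℂ Q :=
  t3 e0 e0 e0 + t3 e1 e0 e0 + Phi010 * t3 e0 e1 e0 + t3 e0 e0 e1
    + t3 e1 e1 e0 + Phi101 * t3 e1 e0 e1 + t3 e0 e1 e1 + Phi111 β * t3 e1 e1 e1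

def R00 : TP2 ℂ Q :=
  (2:ℂ)⁻¹ • ((t2 1 1 + t2 1 gK + t2 gK 1 - t2 gK gK) * (t2 1 1 + (2 * Complex.I) • t2 gE gF))

def R01 : TP2 ℂ Q :=
  (2:ℂ)⁻¹ • ((t2 1 1 - Complex.I • t2 1 gK + t2 gK 1 + Complex.I • t2 gK gK) *
    (t2 1 1 + (1 - Complex.I) • t2 eFK eEK - (1 - Complex.I) • t2 gE gF
      + (1 + Complex.I) • t2 eEFK 1 + (2 * Complex.I) • t2 eEFK eEFK))

def R10 : TP2 ℂ Q :=
  (2:ℂ)⁻¹ • ((t2 1 1 + t2 1 gK - Complex.I • t2 gK 1 + Complex.I • t2 gK gK) *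
    (t2 1 gK + (1 - Complex.I) • t2 eFK gE + (1 - Complex.I) • t2 gE eFK
      - (1 - Complex.I) • t2 1 eEF - (2 * Complex.I) • t2 eEFK eEF))

def R11 (β : ℂ) : TP2 ℂ Q :=
  (β / 2) • ((t2 1 1 - Complex.I • t2 1 gK - Complex.I • t2 gK 1 + t2 gK gK) *
    ((-Complex.I) • t2 gK 1 + (2 * Complex.I) • t2 eEK gF + (1 - Complex.I) • t2 gK eEFK
      - (1 + Complex.I) • t2 eEF 1 - (2 * Complex.I) • t2 eEF eEFK))

/-- The universal R-matrix `R` of the quasi-triangular quasi-Hopf structure on `Q`. -/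
def Rmat (β : ℂ) : TP2 ℂ Q :=
  R00 * t2 e0 e0 + R01 * t2 e0 e1 + R10 * t2 e1 e0 + R11 β * t2 e1 e1

/-- The standard R-matrix `R_st` of the quotient `Q/(K²-1)`. -/
def Rst : TP2 ℂ Q :=
  (2:ℂ)⁻¹ • ∑ m ∈ Finset.range 2, ∑ n ∈ Finset.range 2,
    ((-1:ℂ) ^ (m * n)) • (t2 (gK ^ m) (gK ^ n) * (t2 1 1 + (2 * Complex.I) • t2 gE gF))

/-- The monodromy matrix `M = R₂₁ · R`. -/
def Mmat (β : ℂ) : TP2 ℂ Q := flipA ℂ Q (Rmat β) * Rmat β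

/-- The ribbon element `v = (e₀ − iβ K e₁)(1 − 2 f⁺ f⁻)`. -/
def vRib (β : ℂ) : Q := (e0 - (Complex.I * β) • (gK * e1)) * (1 - (2:ℂ) • (fp * fm))

/-- The coevaluation element `β = e₀ − 2iβ² C e₁`. -/
def bbEl (β : ℂ) : Q := e0 - (2 * Complex.I * β ^ 2) • (Cas * e1)

/-- `b ⊗ c ↦ S(b · bb · S(c))`, inner part of the Drinfeld element. -/
def uInner (S : Q →ₗ[ℂ] Q) (bb : Q) : TP2 ℂ Q →ₗ[ℂ] Q :=
  S ∘ₗ mulA ℂ Q ∘ₗ TensorProduct.map (LinearMap.mulRight ℂ bb) S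

/-- `Φ' ⊗ Φ'' ⊗ Φ''' ↦ S(Φ'' · bb · S(Φ''')) ⊗ Φ'`. -/
def uMap1 (S : Q →ₗ[ℂ] Q) (bb : Q) : TP3 ℂ Q →ₗ[ℂ] TP2 ℂ Q :=
  TensorProduct.map (uInner S bb) LinearMap.id ∘ₗ (TensorProduct.comm ℂ Q (TP2 ℂ Q)).toLinearMap

/-- `R' ⊗ R'' ↦ S(R'') · al · R'`. -/
def uMap2 (S : Q →ₗ[ℂ] Q) (al : Q) : TP2 ℂ Q →ₗ[ℂ] Q :=
  mulA ℂ Q ∘ₗ TensorProduct.map (LinearMap.mulRight ℂ al ∘ₗ S) LinearMap.id ∘ₗ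
    (TensorProduct.comm ℂ Q Q).toLinearMap

/-- `(x ⊗ a) ⊗ (R' ⊗ R'') ↦ x · (S(R'') · al · R') · a`. -/
def uBig (S : Q →ₗ[ℂ] Q) (al : Q) : TP2 ℂ Q ⊗[ℂ] TP2 ℂ Q →ₗ[ℂ] Q :=
  mulA ℂ Q ∘ₗ TensorProduct.map LinearMap.id (mulA ℂ Q ∘ₗ (TensorProduct.comm ℂ Q Q).toLinearMap)
    ∘ₗ (TensorProduct.assoc ℂ Q Q Q).toLinearMap ∘ₗ TensorProduct.map LinearMap.id (uMap2 S al)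

/-- The Drinfeld element `u = Σ S(Φ''·b·S(Φ'''))·S(R'')·α·R'·Φ'` (with `α = 1`). -/
def uDrin (β : ℂ) (S : Q →ₗ[ℂ] Q) : Q :=
  uBig S 1 (uMap1 S (bbEl β) (Phi β) ⊗ₜ[ℂ] Rmat β)

/-- The balancing element `g = b · S(α) · v⁻¹ · u` (with `α = 1`). -/
def balG (β : ℂ) (S : Q →ₗ[ℂ] Q) : Q :=
  bbEl β * S 1 * Ring.inverse (vRib β) * uDrin β S

/-- The cointegral `c = (β²/i)·E·F·(1 + K + K² + K³)`. -/
def cInt (β : ℂ) : Q := (β ^ 2 / Complex.I) • (gE * gF * (1 + gK + gK ^ 2 + gK ^ 3))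

/-- The q-trace of a one-dimensional representation, with balancing element `K⁻¹`. -/
def qTr1 (ρ : Q →ₐ[ℂ] ℂ) : Q →ₗ[ℂ] ℂ := ρ.toLinearMap ∘ₗ LinearMap.mulLeft ℂ gK

/-- The q-trace of a two-dimensional (matrix) representation, with balancing element `K⁻¹`. -/
def qTrM (ρ : Q →ₐ[ℂ] Matrix (Fin 2) (Fin 2) ℂ) : Q →ₗ[ℂ] ℂ :=
  Matrix.traceLinearMap (Fin 2) ℂ ℂ ∘ₗ ρ.toLinearMap ∘ₗ LinearMap.mulLeft ℂ gK

/-- The Drinfeld mapping `φ ↦ (φ ⊗ id)(M)`. -/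
def drinfeldImg (β : ℂ) (φ : Q →ₗ[ℂ] ℂ) : Q :=
  (TensorProduct.lid ℂ Q) (TensorProduct.map φ LinearMap.id (Mmat β))

/-!
Since `K²` is central, `Q` splits into the sectors `K² = 1` and `K² = -1`, cut out by the central
idempotents `e₀, e₁`. The relations `C² e₁ = e₁ / 4` and `β⁴ = -1` make `b` a central involution.
So `b` can be pulled out of every expression, and the two axioms on `Φ` become
`∑ S(Φ') Φ'' S(Φ''') = b` and the corresponding identity for `Φ⁻¹`.

As `e₀, e₁` are central and fixed by `S`, only the components of `Φ` and `Φ⁻¹` in the sectors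
`eᵢ ⊗ eᵢ ⊗ eᵢ` contribute to these sums. The inverse of `Φ` is accessible because in each sector `Φ`
agrees, up to a scalar, with a product of `1 ⊗ K ⊗ 1` and of factors `1 + x` with `x² = 0`, whose
inverses are `1 - x`. The axioms on `Δ` are multiplicative, hence need only be checked on
generators.
-/

section CentralIdempotents

theorem ringInverse_sum_unit_mul {R ι : Type*} [Semiring R] [Fintype ι] {e : ι → R}
    (he : CompleteOrthogonalIdempotents e) (hcomm : ∀ i x, Commute (e i) x) (u : ι → Rˣ) :
    Ring.inverse (∑ i, u i * e i) = ∑ i, ↑(u i)⁻¹ * e i := by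
  classical
  have hmul (a b : ι → R) : (∑ i, a i * e i) * ∑ i, b i * e i = ∑ i, a i * b i * e i := by
    simp only [Finset.sum_mul_sum, (hcomm _ _).mul_mul_mul_comm, he.mul_eq, mul_ite, mul_zero,
      Finset.sum_ite_eq, Finset.mem_univ, if_true]
  exact Ring.inverse_unit
    { val := ∑ i, u i * e i
      inv := ∑ i, ↑(u i)⁻¹ * e i
      val_inv := by simp only [hmul, Units.mul_inv, one_mul, he.complete]
      inv_val := by simp only [hmul, Units.inv_mul, one_mul, he.complete] }

/-- The unit `1 + x`, with inverse `1 - x`, attached to an element `x` of square zero. -/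
def unitOneAdd {R : Type*} [Ring R] (x : R) (hx : x * x = 0) : Rˣ where
  val := 1 + x
  inv := 1 - x
  val_inv := by rw [← (Commute.one_left x).mul_self_sub_mul_self_eq, hx, one_mul, sub_zero]
  inv_val := by rw [← (Commute.one_left x).mul_self_sub_mul_self_eq', hx, one_mul, sub_zero]

variable {k A B : Type*} [CommSemiring k] [Semiring A] [Algebra k A] [Semiring B] [Algebra k B]

theorem tmul_mem_center {a : A} {b : B} (ha : a ∈ Subalgebra.center k A)
    (hb : b ∈ Subalgebra.center k B) : a ⊗ₜ[k] b ∈ Subalgebra.center k (A ⊗[k] B) := by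
  have hab : (a ⊗ₜ[k] 1) * ((1 : A) ⊗ₜ[k] b) = a ⊗ₜ[k] b := by
    rw [Algebra.TensorProduct.tmul_mul_tmul, mul_one, one_mul]
  rw [← hab]
  exact mul_mem (Algebra.TensorProduct.includeLeft_map_center_le k A B ⟨a, ha, rfl⟩)
    (Algebra.TensorProduct.includeRight_map_center_le k A B ⟨b, hb, rfl⟩)

theorem completeOrthogonalIdempotents_tmul {ι κ : Type*} [Fintype ι] [Fintype κ] {e : ι → A}
    {f : κ → B} (he : CompleteOrthogonalIdempotents e) (hf : CompleteOrthogonalIdempotents f) :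
    CompleteOrthogonalIdempotents fun s : ι × κ => e s.1 ⊗ₜ[k] f s.2 := by
  refine CompleteOrthogonalIdempotents.iff_ortho_complete.mpr ⟨fun s t hst => ?_, ?_⟩
  · change e s.1 ⊗ₜ[k] f s.2 * e t.1 ⊗ₜ[k] f t.2 = 0
    rw [Algebra.TensorProduct.tmul_mul_tmul]
    by_cases h : s.1 = t.1
    · rw [hf.ortho fun h' => hst (Prod.ext h h'), tmul_zero]
    · rw [he.ortho h, zero_tmul]
  · rw [Fintype.sum_prod_type, Algebra.TensorProduct.one_def, ← he.complete, ← hf.complete,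
      sum_tmul]
    simp only [tmul_sum]

end CentralIdempotents

section Contractions

variable {k : Type} [Field k] {A : Type} [Ring A] [Algebra k A]

theorem antipL_tmul (S : A →ₗ[k] A) (a b : A) : antipL S (a ⊗ₜ b) = S a * b := rfl

theorem antipR_tmul (S : A →ₗ[k] A) (a b : A) : antipR S (a ⊗ₜ b) = a * S b := rfl

theorem tmap3_tmul (f g h : A →ₗ[k] A) (a b c : A) :
    tmap3 f g h (a ⊗ₜ (b ⊗ₜ c)) = f a * (g b * h c) := rfl

theorem antipL_mul_tmul {S : A →ₗ[k] A} (hS : ∀ a b, S (a * b) = S b * S a) (x : TP2 k A)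
    (a b : A) : antipL S (x * a ⊗ₜ b) = S a * antipL S x * b := by
  induction x using TensorProduct.induction_on with
  | zero => simp only [zero_mul, map_zero, mul_zero]
  | tmul a' b' => simp only [Algebra.TensorProduct.tmul_mul_tmul, antipL_tmul, hS, mul_assoc]
  | add x y hx hy => rw [add_mul, map_add, hx, hy, map_add, mul_add, add_mul]

theorem antipR_tmul_mul {S : A →ₗ[k] A} (hS : ∀ a b, S (a * b) = S b * S a) (a b : A)
    (x : TP2 k A) : antipR S (a ⊗ₜ b * x) = a * antipR S x * S b := by
  induction x using TensorProduct.induction_on with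
  | zero => simp only [mul_zero, map_zero, zero_mul]
  | tmul a' b' => simp only [Algebra.TensorProduct.tmul_mul_tmul, antipR_tmul, hS, mul_assoc]
  | add x y hx hy => rw [mul_add, map_add, hx, hy, map_add, mul_add, add_mul]

theorem antipL_mul {S : A →ₗ[k] A} (hS : ∀ a b, S (a * b) = S b * S a) {x : TP2 k A} {c : k}
    (hx : antipL S x = c • 1) (y : TP2 k A) : antipL S (x * y) = c • antipL S y := by
  induction y using TensorProduct.induction_on with
  | zero => simp only [mul_zero, map_zero, smul_zero]
  | tmul a b =>
    rw [antipL_mul_tmul hS, hx, mul_smul_comm, smul_mul_assoc, mul_one, antipL_tmul]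
  | add y z hy hz => rw [mul_add, map_add, hy, hz, map_add, smul_add]

theorem antipR_mul {S : A →ₗ[k] A} (hS : ∀ a b, S (a * b) = S b * S a) (x : TP2 k A) {y : TP2 k A}
    {c : k} (hy : antipR S y = c • 1) : antipR S (x * y) = c • antipR S x := by
  induction x using TensorProduct.induction_on with
  | zero => simp only [zero_mul, map_zero, smul_zero]
  | tmul a b =>
    rw [antipR_tmul_mul hS, hy, mul_smul_comm, smul_mul_assoc, mul_one, antipR_tmul]
  | add x z hx hz => rw [add_mul, map_add, hx, hz, map_add, smul_add]

theorem antipL_eq_counit_smul_one {S : A →ₗ[k] A} (hone : S 1 = 1)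
    (hS : ∀ a b, S (a * b) = S b * S a) {Δ : A →ₐ[k] TP2 k A} {ε : A →ₐ[k] k} {s : Set A}
    (hs : Algebra.adjoin k s = ⊤) (h : ∀ g ∈ s, antipL S (Δ g) = ε g • 1) (a : A) :
    antipL S (Δ a) = ε a • 1 := by
  have ha : a ∈ Algebra.adjoin k s := hs ▸ Algebra.mem_top
  induction ha using Algebra.adjoin_induction with
  | mem g hg => exact h g hg
  | algebraMap c =>
    simp only [Algebra.algebraMap_eq_smul_one, map_smul, map_one, Algebra.TensorProduct.one_def,
      antipL_tmul, hone, mul_one, smul_eq_mul]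
  | add x y _ _ hx hy => rw [map_add, map_add, hx, hy, map_add, add_smul]
  | mul x y _ _ hx hy => rw [map_mul, antipL_mul hS hx, hy, map_mul, mul_smul]

theorem antipR_eq_counit_smul_one {S : A →ₗ[k] A} (hone : S 1 = 1)
    (hS : ∀ a b, S (a * b) = S b * S a) {Δ : A →ₐ[k] TP2 k A} {ε : A →ₐ[k] k} {s : Set A}
    (hs : Algebra.adjoin k s = ⊤) (h : ∀ g ∈ s, antipR S (Δ g) = ε g • 1) (a : A) :
    antipR S (Δ a) = ε a • 1 := by
  have ha : a ∈ Algebra.adjoin k s := hs ▸ Algebra.mem_top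
  induction ha using Algebra.adjoin_induction with
  | mem g hg => exact h g hg
  | algebraMap c =>
    simp only [Algebra.algebraMap_eq_smul_one, map_smul, map_one, Algebra.TensorProduct.one_def,
      antipR_tmul, hone, mul_one, smul_eq_mul]
  | add x y _ _ hx hy => rw [map_add, map_add, hx, hy, map_add, add_smul]
  | mul x y _ _ hx hy => rw [map_mul, antipR_mul hS _ hy, hx, map_mul, mul_comm, mul_smul]

theorem antipR_mulLeft_comp {b : A} (hb : b ∈ Subalgebra.center k A) (S : A →ₗ[k] A)
    (x : TP2 k A) : antipR (LinearMap.mulLeft k b ∘ₗ S) x = b * antipR S x := by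
  suffices h : antipR (LinearMap.mulLeft k b ∘ₗ S) = LinearMap.mulLeft k b ∘ₗ antipR S from
    LinearMap.congr_fun h x
  refine TensorProduct.ext' fun a a' => ?_
  change a * (b * S a') = b * (a * S a')
  rw [← mul_assoc, Subalgebra.mem_center_iff.mp hb, mul_assoc]

theorem tmap3_mulLeft_comp_middle {b : A} (hb : b ∈ Subalgebra.center k A) (f g h : A →ₗ[k] A)
    (x : TP3 k A) : tmap3 f (LinearMap.mulLeft k b ∘ₗ g) h x = b * tmap3 f g h x := by
  suffices heq : tmap3 f (LinearMap.mulLeft k b ∘ₗ g) h = LinearMap.mulLeft k b ∘ₗ tmap3 f g h from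
    LinearMap.congr_fun heq x
  ext a a' a''
  change f a * (b * g a' * h a'') = b * (f a * (g a' * h a''))
  rw [mul_assoc b, ← mul_assoc, Subalgebra.mem_center_iff.mp hb, mul_assoc]

theorem tmap3_mulLeft_comp_right {b : A} (hb : b ∈ Subalgebra.center k A) (f g h : A →ₗ[k] A)
    (x : TP3 k A) : tmap3 f g (LinearMap.mulLeft k b ∘ₗ h) x = b * tmap3 f g h x := by
  rw [← tmap3_mulLeft_comp_middle hb]
  suffices heq : tmap3 f g (LinearMap.mulLeft k b ∘ₗ h) =
      tmap3 f (LinearMap.mulLeft k b ∘ₗ g) h from LinearMap.congr_fun heq x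
  ext a a' a''
  change f a * (g a' * (b * h a'')) = f a * (b * g a' * h a'')
  rw [← mul_assoc (g a'), Subalgebra.mem_center_iff.mp hb]

theorem tmap3_mul_tmul {f g h : A →ₗ[k] A} {a b c : A} (ha : a ∈ Subalgebra.center k A)
    (hb : b ∈ Subalgebra.center k A) (hf : ∀ x, f (x * a) = f x * a)
    (hg : ∀ x, g (x * b) = g x * b) (hh : ∀ x, h (x * c) = h x * c) (x : TP3 k A) :
    tmap3 f g h (x * a ⊗ₜ (b ⊗ₜ c)) = tmap3 f g h x * (a * (b * c)) := by
  suffices heq : tmap3 f g h ∘ₗ LinearMap.mulRight k (a ⊗ₜ (b ⊗ₜ c)) =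
      LinearMap.mulRight k (a * (b * c)) ∘ₗ tmap3 f g h from LinearMap.congr_fun heq x
  ext x y z
  change tmap3 f g h (x ⊗ₜ (y ⊗ₜ z) * a ⊗ₜ (b ⊗ₜ c)) =
    tmap3 f g h (x ⊗ₜ (y ⊗ₜ z)) * (a * (b * c))
  have hcomm_a : Commute a (g y * h z) := (Subalgebra.mem_center_iff.mp ha _).symm
  have hcomm_b : Commute b (h z) := (Subalgebra.mem_center_iff.mp hb _).symm
  rw [Algebra.TensorProduct.tmul_mul_tmul, Algebra.TensorProduct.tmul_mul_tmul, tmap3_tmul,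
    tmap3_tmul, hf, hg, hh, hcomm_b.mul_mul_mul_comm, hcomm_a.mul_mul_mul_comm]

theorem tmap3_sum_mul_idempotent {ι : Type*} [Fintype ι] {e : ι → A} (he : OrthogonalIdempotents e)
    (hc : ∀ i, e i ∈ Subalgebra.center k A) {f g h : A →ₗ[k] A}
    (hf : ∀ i x, f (x * e i) = f x * e i) (hg : ∀ i x, g (x * e i) = g x * e i)
    (hh : ∀ i x, h (x * e i) = h x * e i) (x : ι × ι × ι → TP3 k A) :
    tmap3 f g h (∑ s, x s * e s.1 ⊗ₜ (e s.2.1 ⊗ₜ e s.2.2)) =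
      ∑ i, tmap3 f g h (x (i, i, i)) * e i := by
  classical
  simp only [map_sum, tmap3_mul_tmul (hc _) (hc _) (hf _) (hg _) (hh _), Fintype.sum_prod_type,
    he.mul_eq, mul_ite, mul_zero, Finset.sum_ite_eq, Finset.mem_univ, if_true]

end Contractions

section RestrictedQuantumGroup

-- Without these shortcuts, unification does not see through `RingQuot` in lemmas such as `neg_mul`.
local instance : Ring Q := inferInstance
local instance : Ring (TP3 ℂ Q) := inferInstance

theorem gK_mul_gKi : gK * gKi = 1 := by
  simpa only [map_mul, map_one] using! RingQuot.mkAlgHom_rel ℂ QRel.KKi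

theorem gKi_mul_gK : gKi * gK = 1 := by
  simpa only [map_mul, map_one] using! RingQuot.mkAlgHom_rel ℂ QRel.KiK

theorem gK_pow_four : gK ^ 4 = 1 := by
  simpa only [map_pow, map_one] using! RingQuot.mkAlgHom_rel ℂ QRel.K4

theorem gKi_eq : gKi = gK * (gK * gK) :=
  calc gKi = gK ^ 4 * gKi := by rw [gK_pow_four, one_mul]
    _ = gK ^ 3 * (gK * gKi) := by rw [pow_succ, mul_assoc]
    _ = gK * (gK * gK) := by rw [gK_mul_gKi, mul_one, pow_three]

theorem gE_mul_gE : gE * gE = 0 := by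
  rw [← pow_two]
  simpa only [map_pow, map_zero] using! RingQuot.mkAlgHom_rel ℂ QRel.Esq

theorem gF_mul_gF : gF * gF = 0 := by
  rw [← pow_two]
  simpa only [map_pow, map_zero] using! RingQuot.mkAlgHom_rel ℂ QRel.Fsq

theorem gK_mul_gE : gK * gE = -(gE * gK) := by
  have hconj : gK * gE * gKi = -gE := by
    simpa only [map_mul, map_neg] using! RingQuot.mkAlgHom_rel ℂ QRel.KEKi
  calc gK * gE = gK * gE * gKi * gK := by rw [mul_assoc _ gKi, gKi_mul_gK, mul_one]
    _ = -(gE * gK) := by rw [hconj, neg_mul]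

theorem gK_mul_gF : gK * gF = -(gF * gK) := by
  have hconj : gK * gF * gKi = -gF := by
    simpa only [map_mul, map_neg] using! RingQuot.mkAlgHom_rel ℂ QRel.KFKi
  calc gK * gF = gK * gF * gKi * gK := by rw [mul_assoc _ gKi, gKi_mul_gK, mul_one]
    _ = -(gF * gK) := by rw [hconj, neg_mul]

theorem gF_mul_gE : gF * gE = gE * gF + (Complex.I / 2) • (gK - gKi) := by
  have hcomm : gE * gF - gF * gE = (2 * Complex.I)⁻¹ • (gK - gKi) := by
    simpa only [map_mul, map_sub, map_smul] using! RingQuot.mkAlgHom_rel ℂ QRel.EF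
  have hI : (2 * Complex.I)⁻¹ = -(Complex.I / 2) := by
    rw [mul_inv, Complex.inv_I]; ring
  rw [hI] at hcomm
  rw [neg_smul, sub_eq_iff_eq_add] at hcomm
  rw [hcomm]; abel

theorem adjoin_generators : Algebra.adjoin ℂ {gE, gF, gK} = ⊤ := by
  have hE : gE ∈ Algebra.adjoin ℂ {gE, gF, gK} := Algebra.subset_adjoin (by simp)
  have hF : gF ∈ Algebra.adjoin ℂ {gE, gF, gK} := Algebra.subset_adjoin (by simp)
  have hK : gK ∈ Algebra.adjoin ℂ {gE, gF, gK} := Algebra.subset_adjoin (by simp)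
  refine Algebra.eq_top_iff.mpr fun a => ?_
  obtain ⟨x, rfl⟩ := RingQuot.mkAlgHom_surjective ℂ QRel a
  induction x using FreeAlgebra.induction with
  | grade0 c => rw [AlgHom.commutes]; exact algebraMap_mem _ c
  | grade1 g =>
    cases g with
    | E => exact hE
    | F => exact hF
    | K => exact hK
    | Kinv =>
      change gKi ∈ _
      rw [gKi_eq]
      exact mul_mem hK (mul_mem hK hK)
  | mul a b ha hb => rw [map_mul]; exact mul_mem ha hb
  | add a b ha hb => rw [map_add]; exact add_mem ha hb

theorem mem_center_of_commute_generators {z : Q} (hE : Commute gE z) (hF : Commute gF z)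
    (hK : Commute gK z) : z ∈ Subalgebra.center ℂ Q := by
  have hle : Algebra.adjoin ℂ {gE, gF, gK} ≤ Subalgebra.centralizer ℂ {z} := by
    refine Algebra.adjoin_le ?_
    rintro _ (rfl | rfl | rfl) _ rfl
    exacts [hE.symm, hF.symm, hK.symm]
  rw [adjoin_generators, top_le_iff, Subalgebra.centralizer_eq_top_iff_subset] at hle
  exact hle rfl

theorem gK_mul_gK_mul_e0 : gK * (gK * e0) = e0 := by
  have h : gK * (gK * gK ^ 2) = 1 := by rw [← gK_pow_four, pow_succ' _ 3, pow_succ' _ 2]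
  rw [e0, mul_smul_comm, mul_smul_comm, mul_add, mul_add, mul_one, h, pow_two, add_comm]

theorem gK_mul_gK_mul_e1 : gK * (gK * e1) = -e1 := by
  have h : gK * (gK * gK ^ 2) = 1 := by rw [← gK_pow_four, pow_succ' _ 3, pow_succ' _ 2]
  rw [e1, mul_smul_comm, mul_smul_comm, mul_sub, mul_sub, mul_one, h, ← pow_two, ← smul_neg,
    neg_sub]

theorem gE_mul_gE_mul (z : Q) : gE * (gE * z) = 0 := by rw [← mul_assoc, gE_mul_gE, zero_mul]

theorem gF_mul_gF_mul (z : Q) : gF * (gF * z) = 0 := by rw [← mul_assoc, gF_mul_gF, zero_mul]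

theorem gK_mul_gE_mul (z : Q) : gK * (gE * z) = -(gE * (gK * z)) := by
  rw [← mul_assoc, gK_mul_gE, neg_mul, mul_assoc]

theorem gK_mul_gF_mul (z : Q) : gK * (gF * z) = -(gF * (gK * z)) := by
  rw [← mul_assoc, gK_mul_gF, neg_mul, mul_assoc]

theorem gF_mul_gE_mul (z : Q) :
    gF * (gE * z) = gE * (gF * z) + (Complex.I / 2) • (gK * z - gK * (gK * (gK * z))) := by
  rw [← mul_assoc, gF_mul_gE, gKi_eq]
  simp only [add_mul, sub_mul, smul_mul_assoc, mul_assoc]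

theorem gK_sq_mem_center : gK ^ 2 ∈ Subalgebra.center ℂ Q := by
  rw [pow_two]
  refine mem_center_of_commute_generators ?_ ?_ ?_ <;> rw [commute_iff_eq]
  · rw [mul_assoc, gK_mul_gE, mul_neg, gK_mul_gE_mul, neg_neg]
  · rw [mul_assoc, gK_mul_gF, mul_neg, gK_mul_gF_mul, neg_neg]
  · rw [mul_assoc]

theorem e0_mem_center : e0 ∈ Subalgebra.center ℂ Q :=
  Subalgebra.smul_mem _ (add_mem (one_mem _) gK_sq_mem_center) _

theorem e1_mem_center : e1 ∈ Subalgebra.center ℂ Q :=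
  Subalgebra.smul_mem _ (sub_mem (one_mem _) gK_sq_mem_center) _

theorem e1_eq_one_sub_e0 : e1 = 1 - e0 := by
  rw [e0, e1]; module

theorem isIdempotentElem_e0 : IsIdempotentElem e0 := by
  have h : gK ^ 2 * e0 = e0 := by rw [pow_two, mul_assoc, gK_mul_gK_mul_e0]
  calc e0 * e0 = (2 : ℂ)⁻¹ • (1 + gK ^ 2) * e0 := by rw [← e0]
    _ = (2 : ℂ)⁻¹ • (e0 + e0) := by rw [smul_mul_assoc, add_mul, one_mul, h]
    _ = e0 := by module

/-- The central idempotents `e₀, e₁`, which cut `Q` into the sectors `K² = 1` and `K² = -1`. -/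
def sectorIdem : Fin 2 → Q := ![e0, e1]

theorem completeOrthogonalIdempotents_sectorIdem : CompleteOrthogonalIdempotents sectorIdem :=
  CompleteOrthogonalIdempotents.pair_iff.mpr ⟨isIdempotentElem_e0, e1_eq_one_sub_e0⟩

theorem sectorIdem_mem_center (i : Fin 2) : sectorIdem i ∈ Subalgebra.center ℂ Q := by
  fin_cases i
  exacts [e0_mem_center, e1_mem_center]

theorem Cas_eq : Cas = gE * gF + (Complex.I / 4) • (gK - gK * (gK * gK)) := by
  rw [Cas, gF_mul_gE, gKi_eq]; module

theorem Cas_mem_center : Cas ∈ Subalgebra.center ℂ Q := by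
  refine mem_center_of_commute_generators ?_ ?_ ?_ <;> rw [commute_iff_eq, Cas_eq] <;>
    simp only [mul_add, add_mul, mul_sub, sub_mul, mul_smul_comm, smul_mul_assoc, mul_assoc,
      mul_neg, neg_neg, mul_zero, gF_mul_gF, gK_mul_gE, gK_mul_gF, gF_mul_gE, gKi_eq,
      gE_mul_gE_mul, gK_mul_gE_mul, gK_mul_gF_mul, gF_mul_gE_mul]
  · module
  · module

theorem bbEl_mem_center (β : ℂ) : bbEl β ∈ Subalgebra.center ℂ Q :=
  sub_mem e0_mem_center (Subalgebra.smul_mem _ (mul_mem Cas_mem_center e1_mem_center) _)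

theorem Cas_mul_e1 : Cas * e1 = (gE * gF + (Complex.I / 2) • gK) * e1 := by
  simp only [Cas_eq, add_mul, sub_mul, smul_mul_assoc, mul_assoc, gK_mul_gK_mul_e1, mul_neg]
  module

theorem Cas_mul_Cas_mul_e1 : Cas * (Cas * e1) = (4 : ℂ)⁻¹ • e1 := by
  have h : Cas * (gE * gF + (Complex.I / 2) • gK) = (gE * gF + (Complex.I / 2) • gK) * Cas :=
    (Subalgebra.mem_center_iff.mp Cas_mem_center _).symm
  rw [Cas_mul_e1, ← mul_assoc, h, mul_assoc, Cas_mul_e1]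
  simp only [mul_add, add_mul, mul_sub, mul_smul_comm, smul_mul_assoc, mul_assoc, mul_neg, neg_neg,
    gE_mul_gE_mul, gK_mul_gE_mul, gK_mul_gF_mul, gF_mul_gE_mul, gK_mul_gK_mul_e1]
  match_scalars <;> grind [Complex.I_mul_I]

theorem bbEl_mul_bbEl {β : ℂ} (hβ : β ^ 4 = -1) : bbEl β * bbEl β = 1 := by
  have hidem := completeOrthogonalIdempotents_sectorIdem
  have h01 : e0 * e1 = 0 := hidem.ortho (i := 0) (j := 1) (by decide)
  have h11 : e1 * e1 = e1 := hidem.idem 1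
  have hC : Cas * e1 * (Cas * e1) = (4 : ℂ)⁻¹ • e1 := by
    rw [mul_assoc, ← mul_assoc e1, ← Subalgebra.mem_center_iff.mp e1_mem_center, mul_assoc Cas,
      h11, Cas_mul_Cas_mul_e1]
  have hcross : e0 * (Cas * e1) = 0 := by
    rw [← mul_assoc, ← Subalgebra.mem_center_iff.mp e0_mem_center, mul_assoc, h01, mul_zero]
  have hcross' : Cas * e1 * e0 = 0 := by
    rw [Subalgebra.mem_center_iff.mp e0_mem_center, hcross]
  have hscalar : 2 * Complex.I * β ^ 2 * (2 * Complex.I * β ^ 2) = 4 := by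
    linear_combination (4 * β ^ 4) * Complex.I_mul_I - 4 * hβ
  calc bbEl β * bbEl β
      = e0 + (2 * Complex.I * β ^ 2 * (2 * Complex.I * β ^ 2)) • (4 : ℂ)⁻¹ • e1 := by
        simp only [bbEl, sub_mul, mul_sub, smul_mul_assoc, mul_smul_comm, hC, hcross, hcross',
          isIdempotentElem_e0.eq, smul_zero, sub_zero, zero_sub, smul_smul, smul_neg,
          sub_neg_eq_add, mul_assoc]
    _ = 1 := by
        rw [hscalar, smul_smul, mul_inv_cancel₀ (by norm_num), one_smul, e1_eq_one_sub_e0]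
        abel

/-- The values on the generators that, together with anti-multiplicativity, characterise the
antipode of `Q`. -/
structure IsAntipode (S : Q →ₗ[ℂ] Q) : Prop where
  map_one : S 1 = 1
  map_mul : ∀ a b, S (a * b) = S b * S a
  map_gE : S gE = -(gE * gKi)
  map_gF : S gF = -(gK * gF)
  map_gK : S gK = gKi

namespace IsAntipode

variable {S : Q →ₗ[ℂ] Q}

theorem map_gKi (hS : IsAntipode S) : S gKi = gK := by
  have h : S gK * S gKi = 1 := by rw [← hS.map_mul, gKi_mul_gK, hS.map_one]
  rw [hS.map_gK] at h
  calc S gKi = gK * gKi * S gKi := by rw [gK_mul_gKi, one_mul]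
    _ = gK := by rw [mul_assoc, h, mul_one]

theorem map_gK_sq (hS : IsAntipode S) : S (gK ^ 2) = gK ^ 2 :=
  calc S (gK ^ 2) = gKi * gKi := by rw [pow_two, hS.map_mul, hS.map_gK]
    _ = gK * (gK * (gK * gKi)) := by rw [gKi_eq]; simp only [mul_assoc]
    _ = gK ^ 2 := by rw [gK_mul_gKi, mul_one, pow_two]

theorem map_sectorIdem (hS : IsAntipode S) (i : Fin 2) : S (sectorIdem i) = sectorIdem i := by
  fin_cases i
  · change S e0 = e0
    rw [e0, map_smul, map_add, hS.map_one, hS.map_gK_sq]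
  · change S e1 = e1
    rw [e1, map_smul, map_sub, hS.map_one, hS.map_gK_sq]

theorem map_mul_sectorIdem (hS : IsAntipode S) (i : Fin 2) (x : Q) :
    S (x * sectorIdem i) = S x * sectorIdem i := by
  rw [hS.map_mul, hS.map_sectorIdem, Subalgebra.mem_center_iff.mp (sectorIdem_mem_center i)]

theorem antipL_comul (hS : IsAntipode S) {Δ : Q →ₐ[ℂ] TP2 ℂ Q} {ε : Q →ₐ[ℂ] ℂ}
    (hΔE : Δ gE = (1 : Q) ⊗ₜ[ℂ] gE + gE ⊗ₜ[ℂ] gK) (hΔF : Δ gF = gKi ⊗ₜ[ℂ] gF + gF ⊗ₜ[ℂ] (1 : Q))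
    (hΔK : Δ gK = gK ⊗ₜ[ℂ] gK) (hεE : ε gE = 0) (hεF : ε gF = 0) (hεK : ε gK = 1) (a : Q) :
    antipL S (Δ a) = ε a • (1 : Q) := by
  refine antipL_eq_counit_smul_one hS.map_one hS.map_mul adjoin_generators ?_ a
  rintro _ (rfl | rfl | rfl)
  · rw [hΔE, hεE, map_add, antipL_tmul, antipL_tmul, hS.map_one, hS.map_gE, one_mul, neg_mul,
      mul_assoc, gKi_mul_gK, mul_one, add_neg_cancel, zero_smul]
  · rw [hΔF, hεF, map_add, antipL_tmul, antipL_tmul, hS.map_gKi, hS.map_gF, mul_one,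
      add_neg_cancel, zero_smul]
  · rw [hΔK, hεK, antipL_tmul, hS.map_gK, gKi_mul_gK, one_smul]

theorem antipR_comul (hS : IsAntipode S) {Δ : Q →ₐ[ℂ] TP2 ℂ Q} {ε : Q →ₐ[ℂ] ℂ}
    (hΔE : Δ gE = (1 : Q) ⊗ₜ[ℂ] gE + gE ⊗ₜ[ℂ] gK) (hΔF : Δ gF = gKi ⊗ₜ[ℂ] gF + gF ⊗ₜ[ℂ] (1 : Q))
    (hΔK : Δ gK = gK ⊗ₜ[ℂ] gK) (hεE : ε gE = 0) (hεF : ε gF = 0) (hεK : ε gK = 1) (a : Q) :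
    antipR S (Δ a) = ε a • (1 : Q) := by
  refine antipR_eq_counit_smul_one hS.map_one hS.map_mul adjoin_generators ?_ a
  rintro _ (rfl | rfl | rfl)
  · rw [hΔE, hεE, map_add, antipR_tmul, antipR_tmul, hS.map_gE, hS.map_gK, one_mul,
      neg_add_cancel, zero_smul]
  · rw [hΔF, hεF, map_add, antipR_tmul, antipR_tmul, hS.map_one, hS.map_gF, mul_one, mul_neg,
      ← mul_assoc, gKi_mul_gK, one_mul, neg_add_cancel, zero_smul]
  · rw [hΔK, hεK, antipR_tmul, hS.map_gK, gK_mul_gKi, one_smul]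

end IsAntipode

theorem commute_sectorIdem_tmul (s : Fin 2 × Fin 2 × Fin 2) (x : TP3 ℂ Q) :
    Commute (sectorIdem s.1 ⊗ₜ[ℂ] (sectorIdem s.2.1 ⊗ₜ[ℂ] sectorIdem s.2.2)) x :=
  (Subalgebra.mem_center_iff.mp (tmul_mem_center (sectorIdem_mem_center _)
    (tmul_mem_center (sectorIdem_mem_center _) (sectorIdem_mem_center _))) x).symm

/-- The component `Φ^{ijk}` of the coassociator in the sector `eᵢ ⊗ eⱼ ⊗ eₖ`. -/
def phiComponent (β : ℂ) : Fin 2 × Fin 2 × Fin 2 → TP3 ℂ Q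
  | (0, 1, 0) => Phi010
  | (1, 0, 1) => Phi101
  | (1, 1, 1) => Phi111 β
  | _ => 1

theorem Phi_eq_sum_phiComponent (β : ℂ) : Phi β =
    ∑ s, phiComponent β s * sectorIdem s.1 ⊗ₜ[ℂ] (sectorIdem s.2.1 ⊗ₜ[ℂ] sectorIdem s.2.2) := by
  simp only [Phi, Fintype.sum_prod_type, Fin.sum_univ_two, sectorIdem, phiComponent, t3, one_mul,
    Matrix.cons_val_zero, Matrix.cons_val_one]
  abel

theorem eFK_mul_eFK : eFK * eFK = 0 := by
  rw [eFK, mul_assoc, gK_mul_gF_mul, mul_neg, gF_mul_gF_mul, neg_zero]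

/-- The unit `1 ⊗ K ⊗ 1`. -/
def gKMidUnit : (TP3 ℂ Q)ˣ where
  val := t3 1 gK 1
  inv := t3 1 gKi 1
  val_inv := by
    simp only [t3, Algebra.TensorProduct.tmul_mul_tmul, gK_mul_gKi, mul_one,
      Algebra.TensorProduct.one_def]
  inv_val := by
    simp only [t3, Algebra.TensorProduct.tmul_mul_tmul, gKi_mul_gK, mul_one,
      Algebra.TensorProduct.one_def]

/-- A unit agreeing with `Φ^{010}` in the sector `e₀ ⊗ e₁ ⊗ e₀`. -/
def phi010Unit : (TP3 ℂ Q)ˣ :=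
  unitOneAdd (-((1 + Complex.I) • t3 gE gK gF)) (by simp [t3, gE_mul_gE]) *
  unitOneAdd ((1 - Complex.I) • t3 eFK gK eEK) (by simp [t3, eFK_mul_eFK])

/-- A unit agreeing with `Φ^{101}` in the sector `e₁ ⊗ e₀ ⊗ e₁`. -/
def phi101Unit : (TP3 ℂ Q)ˣ :=
  gKMidUnit *
  unitOneAdd ((1 + Complex.I) • t3 1 gE gF - (1 - Complex.I) • t3 eFK eEK 1) (by
    simp [t3, eEK, eFK, mul_sub, sub_mul, mul_assoc, gE_mul_gE, gE_mul_gE_mul, gF_mul_gF,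
      gF_mul_gF_mul, gK_mul_gE, gK_mul_gE_mul, gK_mul_gF_mul]) *
  unitOneAdd ((1 - Complex.I) • t3 1 eFK eEK + (1 + Complex.I) • t3 gE gF 1) (by
    simp [t3, eEK, eFK, mul_add, add_mul, mul_assoc, gE_mul_gE, gE_mul_gE_mul, gF_mul_gF,
      gF_mul_gF_mul, gK_mul_gF, gK_mul_gE_mul, gK_mul_gF_mul])

/-- A unit agreeing, up to the scalar `-iβ²`, with `Φ^{111}` in the sector `e₁ ⊗ e₁ ⊗ e₁`. -/
def phi111Unit : (TP3 ℂ Q)ˣ :=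
  gKMidUnit *
  unitOneAdd (-((1 + Complex.I) • (t3 eFK eEK 1 + t3 eFK gK eEK))) (by
    simp [t3, mul_add, add_mul, eFK_mul_eFK]) *
  unitOneAdd ((1 - Complex.I) • t3 1 eFK eEK) (by simp [t3, eFK_mul_eFK]) *
  unitOneAdd (-((1 - Complex.I) • t3 1 gE gF)) (by simp [t3, gE_mul_gE]) *
  unitOneAdd ((1 + Complex.I) • (t3 gE gF 1 - t3 gE gK gF)) (by
    simp [t3, mul_sub, sub_mul, gE_mul_gE])

theorem coe_inv_phi111Unit : (↑phi111Unit⁻¹ : TP3 ℂ Q) =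
    (1 - (1 + Complex.I) • (t3 gE gF 1 - t3 gE gK gF)) * (1 + (1 - Complex.I) • t3 1 gE gF) *
      (1 - (1 - Complex.I) • t3 1 eFK eEK) *
        (1 + (1 + Complex.I) • (t3 eFK eEK 1 + t3 eFK gK eEK)) * t3 1 gKi 1 := by
  simp only [phi111Unit, mul_inv_rev, Units.val_mul, unitOneAdd, Units.inv_mk, gKMidUnit,
    sub_neg_eq_add, mul_assoc]

/-- The scalar `-iβ²` relating `Φ^{111}` to `phi111Unit`; since `β⁴ = -1`, it is its own
inverse. -/
def phi111Scalar (β : ℂ) (hβ : β ^ 4 = -1) : ℂˣ where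
  val := -(Complex.I * β ^ 2)
  inv := -(Complex.I * β ^ 2)
  val_inv := by linear_combination β ^ 4 * Complex.I_mul_I - hβ
  inv_val := by linear_combination β ^ 4 * Complex.I_mul_I - hβ

/-- Units agreeing with the components of the coassociator sector by sector. The components
themselves need not be invertible outside their sectors. -/
def phiUnit (β : ℂ) (hβ : β ^ 4 = -1) : Fin 2 × Fin 2 × Fin 2 → (TP3 ℂ Q)ˣ
  | (0, 1, 0) => phi010Unit
  | (1, 0, 1) => phi101Unit
  | (1, 1, 1) => phi111Scalar β hβ • phi111Unit
  | _ => 1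

theorem Phi010_mul_sectorIdem : Phi010 * t3 e0 e1 e0 = phi010Unit * t3 e0 e1 e0 := by
  simp only [Phi010, phi010Unit, unitOneAdd, Units.val_mul, t3, eEFK, eFK, eEK,
    Algebra.TensorProduct.one_def, add_mul, sub_mul, smul_mul_assoc,
    Algebra.TensorProduct.tmul_mul_tmul, mul_assoc, mul_add, mul_smul_comm, one_mul,
    gF_mul_gE_mul, gK_mul_gK_mul_e0, gK_mul_gK_mul_e1, neg_mul, neg_neg, sub_self, smul_zero,
    add_zero, tmul_neg, neg_tmul, smul_neg]
  match_scalars <;> grind [Complex.I_mul_I]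

theorem Phi101_mul_sectorIdem : Phi101 * t3 e1 e0 e1 = phi101Unit * t3 e1 e0 e1 := by
  simp only [Phi101, phi101Unit, gKMidUnit, unitOneAdd, Units.val_mul, t3, eEF, eEFK, eFK, eEK,
    Algebra.TensorProduct.one_def, add_mul, sub_mul, smul_mul_assoc,
    Algebra.TensorProduct.tmul_mul_tmul, mul_assoc, mul_add, mul_sub,
    mul_smul_comm, one_mul, mul_one, neg_mul,
    gK_mul_gE_mul, gK_mul_gF_mul, gF_mul_gE_mul, gK_mul_gK_mul_e0,
    gK_mul_gK_mul_e1, mul_neg, neg_neg, tmul_neg, neg_tmul, smul_neg,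
    tmul_add, tmul_smul, add_tmul, sub_tmul, tmul_sub, ← smul_tmul']
  match_scalars <;> grind [Complex.I_mul_I]

theorem Phi111_mul_sectorIdem (β : ℂ) : Phi111 β * t3 e1 e1 e1 =
    -(Complex.I * β ^ 2) • phi111Unit * t3 e1 e1 e1 := by
  simp only [Phi111, phi111Unit, gKMidUnit, unitOneAdd, Units.val_mul, t3, eEFK, eFK, eEK, eEF,
    Algebra.TensorProduct.one_def, add_mul, sub_mul, smul_mul_assoc,
    Algebra.TensorProduct.tmul_mul_tmul, mul_assoc, mul_add, mul_sub, mul_smul_comm,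
    one_mul, mul_one, neg_mul,
    gE_mul_gE_mul, gF_mul_gF_mul, gK_mul_gE_mul, gK_mul_gF_mul, gF_mul_gE_mul,
    gK_mul_gK_mul_e1, mul_neg, neg_neg, sub_self, smul_zero, add_zero, tmul_neg, neg_tmul,
    smul_neg, tmul_add, tmul_smul, add_tmul, sub_tmul, tmul_sub, ← smul_tmul', mul_zero, zero_tmul,
    tmul_zero, neg_zero, zero_add]
  match_scalars <;> grind [Complex.I_mul_I]

theorem phiComponent_mul_sectorIdem {β : ℂ} (hβ : β ^ 4 = -1) (s : Fin 2 × Fin 2 × Fin 2) :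
    phiComponent β s * sectorIdem s.1 ⊗ₜ[ℂ] (sectorIdem s.2.1 ⊗ₜ[ℂ] sectorIdem s.2.2) =
      phiUnit β hβ s * sectorIdem s.1 ⊗ₜ[ℂ] (sectorIdem s.2.1 ⊗ₜ[ℂ] sectorIdem s.2.2) := by
  match s with
  | (0, 1, 0) => exact Phi010_mul_sectorIdem
  | (1, 0, 1) => exact Phi101_mul_sectorIdem
  | (1, 1, 1) => exact Phi111_mul_sectorIdem β
  | (0, 0, _) | (0, 1, 1) | (1, 0, 0) | (1, 1, 0) => rfl

theorem ringInverse_Phi {β : ℂ} (hβ : β ^ 4 = -1) : Ring.inverse (Phi β) =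
    ∑ s, ↑(phiUnit β hβ s)⁻¹ *
      sectorIdem s.1 ⊗ₜ[ℂ] (sectorIdem s.2.1 ⊗ₜ[ℂ] sectorIdem s.2.2) := by
  have he := completeOrthogonalIdempotents_sectorIdem
  rw [Phi_eq_sum_phiComponent, Finset.sum_congr rfl fun s _ => phiComponent_mul_sectorIdem hβ s]
  exact ringInverse_sum_unit_mul (completeOrthogonalIdempotents_tmul he
    (completeOrthogonalIdempotents_tmul he he)) commute_sectorIdem_tmul _

namespace IsAntipode

variable {S : Q →ₗ[ℂ] Q}

theorem tmap3_Phi111_mul_e1 (hS : IsAntipode S) (β : ℂ) :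
    tmap3 S LinearMap.id S (Phi111 β) * e1 = -((2 * Complex.I * β ^ 2) • (Cas * e1)) := by
  have hT (a b c : Q) : tmap3 S LinearMap.id S (t3 a b c) = S a * (b * S c) := rfl
  simp only [Phi111, eEF, eEK, eFK, eEFK, map_smul, map_add, map_sub, hT, hS.map_mul, hS.map_one,
    hS.map_gE, hS.map_gF, hS.map_gK, gKi_eq, Cas_mul_e1, add_mul, sub_mul, smul_mul_assoc,
    mul_assoc, mul_neg, neg_mul, neg_neg, one_mul, mul_add, mul_sub, mul_smul_comm, smul_neg,
    gE_mul_gE_mul, gF_mul_gF_mul, gK_mul_gE_mul, gK_mul_gF_mul, gF_mul_gE_mul, gK_mul_gK_mul_e1,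
    mul_zero, smul_zero, neg_zero, add_zero, zero_add]
  match_scalars <;> grind [Complex.I_mul_I]

theorem tmap3_inv_phi111Unit_mul_e1 (hS : IsAntipode S) :
    tmap3 LinearMap.id S LinearMap.id ↑phi111Unit⁻¹ * e1 = (2 : ℂ) • (Cas * e1) := by
  rw [coe_inv_phi111Unit]
  have hT (a b c : Q) : tmap3 LinearMap.id S LinearMap.id (a ⊗ₜ (b ⊗ₜ c)) = a * (S b * c) := rfl
  simp only [t3, eEK, eFK, gKi_eq, Algebra.TensorProduct.one_def, add_mul, sub_mul, mul_add,
    mul_sub, smul_mul_assoc, mul_smul_comm, Algebra.TensorProduct.tmul_mul_tmul, mul_one, one_mul,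
    map_add, map_sub, map_smul, map_neg, map_zero, zero_mul,
    hT, hS.map_mul, hS.map_gE, hS.map_gF, hS.map_gK, Cas_mul_e1, mul_assoc, mul_neg,
    neg_mul, neg_neg, smul_neg,
    gE_mul_gE_mul, gF_mul_gF_mul, gK_mul_gE_mul, gK_mul_gF_mul, gF_mul_gE_mul, gK_mul_gK_mul_e1,
    mul_zero, smul_zero, neg_zero, sub_zero, add_zero, zero_add, zero_sub]
  match_scalars <;> grind [Complex.I_mul_I]

theorem tmap3_Phi (hS : IsAntipode S) (β : ℂ) : tmap3 S LinearMap.id S (Phi β) = bbEl β := by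
  have hone : tmap3 S LinearMap.id S 1 = 1 := by
    simp only [Algebra.TensorProduct.one_def, tmap3_tmul, hS.map_one, LinearMap.id_apply, mul_one]
  rw [Phi_eq_sum_phiComponent,
    tmap3_sum_mul_idempotent completeOrthogonalIdempotents_sectorIdem.toOrthogonalIdempotents
      sectorIdem_mem_center hS.map_mul_sectorIdem (fun _ _ => rfl) hS.map_mul_sectorIdem,
    Fin.sum_univ_two]
  change tmap3 S LinearMap.id S 1 * e0 + tmap3 S LinearMap.id S (Phi111 β) * e1 = bbEl β
  rw [hone, one_mul, hS.tmap3_Phi111_mul_e1, ← sub_eq_add_neg, bbEl]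

theorem tmap3_ringInverse_Phi (hS : IsAntipode S) {β : ℂ} (hβ : β ^ 4 = -1) :
    tmap3 LinearMap.id S LinearMap.id (Ring.inverse (Phi β)) = bbEl β := by
  have hone : tmap3 LinearMap.id S LinearMap.id 1 = 1 := by
    simp only [Algebra.TensorProduct.one_def, tmap3_tmul, hS.map_one, LinearMap.id_apply, mul_one]
  rw [ringInverse_Phi hβ,
    tmap3_sum_mul_idempotent completeOrthogonalIdempotents_sectorIdem.toOrthogonalIdempotents
      sectorIdem_mem_center (fun _ _ => rfl) hS.map_mul_sectorIdem (fun _ _ => rfl),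
    Fin.sum_univ_two]
  change tmap3 LinearMap.id S LinearMap.id 1 * e0 + tmap3 LinearMap.id S LinearMap.id
    (-(Complex.I * β ^ 2) • ↑phi111Unit⁻¹) * e1 = bbEl β
  rw [hone, one_mul, map_smul, smul_mul_assoc, hS.tmap3_inv_phi111Unit_mul_e1, bbEl]
  module

end IsAntipode

end RestrictedQuantumGroup

/-- with the coevaluation element `b = e₀ − 2iβ²·C·e₁` (and `α = 1`),
`(Q, Φ, S, 1, b)` is a quasi-Hopf algebra: `b` is central and invertible and the
quasi-Hopf antipode axioms hold. -/
theorem statement10 (β : ℂ) (hβ : β ^ 4 = -1)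
    (Δ : Q →ₐ[ℂ] TP2 ℂ Q)
    (hΔE : Δ gE = (1:Q) ⊗ₜ[ℂ] gE + gE ⊗ₜ[ℂ] gK)
    (hΔF : Δ gF = gKi ⊗ₜ[ℂ] gF + gF ⊗ₜ[ℂ] (1:Q))
    (hΔK : Δ gK = gK ⊗ₜ[ℂ] gK)
    (ce : Q →ₐ[ℂ] ℂ) (hceE : ce gE = 0) (hceF : ce gF = 0) (hceK : ce gK = 1)
    (S : Q →ₗ[ℂ] Q) (hS1 : S 1 = 1) (hSmul : ∀ a b : Q, S (a * b) = S b * S a)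
    (hSE : S gE = -(gE * gKi)) (hSF : S gF = -(gK * gF)) (hSK : S gK = gKi) :
    (∀ x : Q, bbEl β * x = x * bbEl β) ∧
    IsUnit (bbEl β) ∧
    (∀ a : Q, antipL S (Δ a) = ce a • (1:Q)) ∧
    (∀ a : Q, antipR (LinearMap.mulLeft ℂ (bbEl β) ∘ₗ S) (Δ a) = ce a • bbEl β) ∧
    tmap3 S LinearMap.id (LinearMap.mulLeft ℂ (bbEl β) ∘ₗ S) (Phi β) = 1 ∧
    tmap3 LinearMap.id (LinearMap.mulLeft ℂ (bbEl β) ∘ₗ S) LinearMap.id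
      (Ring.inverse (Phi β)) = 1 := by
  have hS : IsAntipode S := ⟨hS1, hSmul, hSE, hSF, hSK⟩
  have hb := bbEl_mem_center β
  have hbb : bbEl β * bbEl β = 1 := bbEl_mul_bbEl hβ
  refine ⟨fun x => (Subalgebra.mem_center_iff.mp hb x).symm, ⟨⟨_, _, hbb, hbb⟩, rfl⟩,
    hS.antipL_comul hΔE hΔF hΔK hceE hceF hceK, fun a => ?_, ?_, ?_⟩
  · rw [antipR_mulLeft_comp hb, hS.antipR_comul hΔE hΔF hΔK hceE hceF hceK, mul_smul_comm, mul_one]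
  · rw [tmap3_mulLeft_comp_right hb, hS.tmap3_Phi, hbb]
  · rw [tmap3_mulLeft_comp_middle hb, hS.tmap3_ringInverse_Phi hβ, hbb]
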